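/- arXiv:1506.00311 — 2 statements merged into one kernel-verified Lean document; each statement's English description precedes it below -/
import Mathlib

section
/- Let k be a field and (K, b, B) a mixed complex over k. Then the connecting homomorphism δ : HH_n(K) → HC⁻_{n+1}(K) vanishes for every n if and only if there exists an isomorphism of graded k[u]-modules HC⁻_•(K) ≅ HH_•(K)[[u]], where HH_•(K)[[u]]_m := ∏_{j≥0} HH_{m+2j}(K) with u acting by the canonical shift dropping the j = 0 component, and u acts on HC⁻_•(K) by the map induced by multiplication by u on K[[u]]. -/
/-!
The long exact sequence `⋯ → HC⁻_{n+2} → HC⁻ₙ → HHₙ → HC⁻_{n+1} → ⋯` shows that `δ = 0` if and only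
if `u` is injective on `HC⁻_•(K)`. As `u` is injective on `HH_•(K)[[u]]`, an isomorphism of graded
`k[u]`-modules forces `δ = 0`.

Conversely, if `δ = 0` then `p` is surjective and has a linear section `s` over the field `k`. An
element of `K[[u]]` is a `u`-adically convergent sum, so for `c_l ∈ K[[u]]_{n+2l}` the recursion
`X_l = c_l + u X_{l+1}` has exactly one solution, `X_l = ∑ⱼ uʲ c_{l+j}`: both `lim` and `lim¹` of
the tower `⋯ → K[[u]]_{n+4} → K[[u]]_{n+2} → K[[u]]ₙ` vanish. The same then holds for its homology,
the tower of the `HC⁻_{n+2l}`. Hence `h ↦ ∑ₗ uˡ s(h_l)` is a well-defined map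
`HH_•(K)[[u]] → HC⁻_•(K)`, and exactness of `0 → HC⁻_{n+2} → HC⁻ₙ → HHₙ → 0` makes it bijective.
-/

universe u v

/-- A mixed complex `(K, b, B)` over a field `k`: a `ℤ`-graded `k`-vector space together
with a differential `b` of homological degree `-1` and a differential `B` of homological
degree `+1` such that `b ∘ b = 0`, `B ∘ B = 0` and `b ∘ B + B ∘ b = 0`. -/
structure MixedComplex (k : Type u) [Field k] where
  V : ℤ → Type v
  [acg : ∀ n, AddCommGroup (V n)]
  [mod : ∀ n, Module k (V n)]
  b : ∀ n : ℤ, V n →ₗ[k] V (n - 1)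
  B : ∀ n : ℤ, V n →ₗ[k] V (n + 1)
  b_sq : ∀ (n : ℤ) (x : V n), b (n - 1) (b n x) = 0
  B_sq : ∀ (n : ℤ) (x : V n), B (n + 1) (B n x) = 0
  anticomm : ∀ (n : ℤ) (x : V n),
    cast (congrArg V (by omega : n + 1 - 1 = n - 1 + 1)) (b (n + 1) (B n x))
      + B (n - 1) (b n x) = 0

attribute [instance] MixedComplex.acg MixedComplex.mod

namespace MixedComplex

variable {k : Type u} [Field k]

/-- Transport along an equality of degrees, as a `k`-linear map. -/
def vcast (C : MixedComplex k) {n m : ℤ} (h : n = m) : C.V n →ₗ[k] C.V m where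
  toFun x := cast (congrArg C.V h) x
  map_add' x y := by subst h; rfl
  map_smul' c x := by subst h; rfl

/-- The degree-`m` part of the negative cyclic complex `K[[u]]`:
`K[[u]]ₘ = ∏_{j ≥ 0} K_{m+2j}` (the `j`-th component is the coefficient of `uʲ`,
where `u` is a formal variable of homological degree `-2`). -/
abbrev NC (C : MixedComplex k) (m : ℤ) : Type v := ∀ j : ℕ, C.V (m + 2 * (j : ℤ))

/-- The differential `b + uB` on the negative cyclic complex:
`(b + uB) (x_j)_j = (b x₀, b x₁ + B x₀, b x₂ + B x₁, …)`. -/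
def nDfun (C : MixedComplex k) (m : ℤ) (x : C.NC m) :
    ∀ j : ℕ, C.V (m - 1 + 2 * (j : ℤ))
  | 0 => C.vcast (by omega) (C.b (m + 2 * ((0 : ℕ) : ℤ)) (x 0))
  | (j + 1) =>
      C.vcast (by push_cast; omega) (C.b (m + 2 * (((j + 1) : ℕ) : ℤ)) (x (j + 1)))
        + C.vcast (by push_cast; omega) (C.B (m + 2 * ((j : ℕ) : ℤ)) (x j))

/-- The differential `b + uB : K[[u]]ₘ → K[[u]]_{m-1}` as a linear map. -/
def nD (C : MixedComplex k) (m : ℤ) : C.NC m →ₗ[k] C.NC (m - 1) where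
  toFun := C.nDfun m
  map_add' x y := by
    funext j
    cases j with
    | zero => simp [nDfun]
    | succ j => simp only [nDfun, Pi.add_apply, map_add]; abel
  map_smul' c x := by
    funext j
    cases j with
    | zero => simp [nDfun]
    | succ j => simp only [nDfun, Pi.smul_apply, map_smul, RingHom.id_apply, smul_add]

/-- Multiplication by the formal variable `u` (of homological degree `-2`):
`u : K[[u]]_{m+2} → K[[u]]ₘ`, `(u x)₀ = 0`, `(u x)_{j+1} = x_j`. -/
def nUfun (C : MixedComplex k) (m : ℤ) (x : C.NC (m + 2)) :
    ∀ j : ℕ, C.V (m + 2 * (j : ℤ))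
  | 0 => 0
  | (j + 1) => C.vcast (by push_cast; omega) (x j)

/-- Multiplication by `u` as a linear map `K[[u]]_{m+2} → K[[u]]ₘ`. -/
def nU (C : MixedComplex k) (m : ℤ) : C.NC (m + 2) →ₗ[k] C.NC m where
  toFun := C.nUfun m
  map_add' x y := by
    funext j
    cases j with
    | zero => simp [nUfun]
    | succ j => simp [nUfun]
  map_smul' c x := by
    funext j
    cases j with
    | zero => simp [nUfun]
    | succ j => simp [nUfun]

/-- The projection `p : K[[u]]ₘ → Kₘ` onto the `j = 0` component. -/
def nP (C : MixedComplex k) (m : ℤ) : C.NC m →ₗ[k] C.V m :=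
  (C.vcast (by omega : m + 2 * ((0 : ℕ) : ℤ) = m)).comp
    (LinearMap.proj (R := k) (φ := fun j : ℕ => C.V (m + 2 * (j : ℤ))) 0)

/-- Transport along an equality of degrees for the negative cyclic complex. -/
def ncast (C : MixedComplex k) {n m : ℤ} (h : n = m) : C.NC n →ₗ[k] C.NC m := by
  subst h; exact LinearMap.id

end MixedComplex

namespace MixedComplex

variable {k : Type u} [Field k]

@[simp] lemma vcast_rfl (C : MixedComplex k) {n : ℤ} (x : C.V n) :
    C.vcast rfl x = x := rfl

lemma vcast_vcast (C : MixedComplex k) {n m p : ℤ} (h : n = m) (h' : m = p) (x : C.V n) :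
    C.vcast h' (C.vcast h x) = C.vcast (h.trans h') x := by subst h; subst h'; rfl

lemma b_vcast (C : MixedComplex k) {n m : ℤ} (h : n = m) (x : C.V n) :
    C.b m (C.vcast h x) = C.vcast (by rw [h]) (C.b n x) := by subst h; rfl

lemma B_vcast (C : MixedComplex k) {n m : ℤ} (h : n = m) (x : C.V n) :
    C.B m (C.vcast h x) = C.vcast (by rw [h]) (C.B n x) := by subst h; rfl

lemma vcast_eq_zero_iff (C : MixedComplex k) {n m : ℤ} (h : n = m) (x : C.V n) :
    C.vcast h x = 0 ↔ x = 0 := by subst h; exact Iff.rfl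

lemma ncast_apply (C : MixedComplex k) {n m : ℤ} (h : n = m) (x : C.NC n) (j : ℕ) :
    C.ncast h x j = C.vcast (by rw [h]) (x j) := by subst h; rfl

lemma anticomm' (C : MixedComplex k) (n : ℤ) (x : C.V n) :
    C.vcast (by omega : n + 1 - 1 = n - 1 + 1) (C.b (n + 1) (C.B n x)) =
      - C.B (n - 1) (C.b n x) :=
  eq_neg_of_add_eq_zero_left (C.anticomm n x)

/-- Cycles of the negative cyclic complex in degree `n`. -/
def cyc (C : MixedComplex k) (n : ℤ) : Submodule k (C.NC n) := LinearMap.ker (C.nD n)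

/-- Boundaries of the negative cyclic complex in degree `n`. -/
def bnd (C : MixedComplex k) (n : ℤ) : Submodule k (C.NC n) :=
  LinearMap.range ((C.ncast (by omega : n + 1 - 1 = n)).comp (C.nD (n + 1)))

/-- Negative cyclic homology `HC⁻ₙ(K) = Hₙ(K[[u]], b + uB)`. -/
abbrev HCneg (C : MixedComplex k) (n : ℤ) :=
  C.cyc n ⧸ (C.bnd n).comap (C.cyc n).subtype

/-- Cycles of `(K, b)` in degree `n`. -/
def bcyc (C : MixedComplex k) (n : ℤ) : Submodule k (C.V n) := LinearMap.ker (C.b n)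

/-- Boundaries of `(K, b)` in degree `n`. -/
def bbnd (C : MixedComplex k) (n : ℤ) : Submodule k (C.V n) :=
  LinearMap.range ((C.vcast (by omega : n + 1 - 1 = n)).comp (C.b (n + 1)))

/-- Hochschild homology `HHₙ(K) = Hₙ(K, b)`. -/
abbrev HH (C : MixedComplex k) (n : ℤ) :=
  C.bcyc n ⧸ (C.bbnd n).comap (C.bcyc n).subtype

@[simp] lemma nD_apply (C : MixedComplex k) (m : ℤ) (x : C.NC m) :
    C.nD m x = C.nDfun m x := rfl

@[simp] lemma nU_apply (C : MixedComplex k) (m : ℤ) (x : C.NC (m + 2)) :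
    C.nU m x = C.nUfun m x := rfl

@[simp] lemma nP_apply (C : MixedComplex k) (m : ℤ) (x : C.NC m) :
    C.nP m x = C.vcast (by omega) (x 0) := rfl

lemma uH_cycles (C : MixedComplex k) (n : ℤ) :
    ∀ x ∈ C.cyc (n + 2), C.nU n x ∈ C.cyc n := by
  intro x hx
  rw [cyc, LinearMap.mem_ker] at hx ⊢
  funext j
  have hc : ∀ i : ℕ, C.nDfun (n + 2) x i = 0 := fun i => congrFun hx i
  cases j with
  | zero =>
    show C.nDfun n (C.nUfun n x) 0 = 0
    simp only [nDfun, nUfun, map_zero]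
  | succ j =>
    show C.nDfun n (C.nUfun n x) (j + 1) = 0
    cases j with
    | zero =>
      have h0 := hc 0
      simp only [nDfun] at h0
      rw [vcast_eq_zero_iff] at h0
      simp only [nDfun, nUfun, map_zero, add_zero, b_vcast, vcast_vcast, h0]
    | succ j =>
      have h1 := hc (j + 1)
      simp only [nDfun] at h1
      show C.vcast _ (C.b _ (C.nUfun n x (j + 1 + 1))) +
          C.vcast _ (C.B _ (C.nUfun n x (j + 1))) = 0
      simp only [nUfun, b_vcast, B_vcast, vcast_vcast]
      have h2 := congrArg (C.vcast (by push_cast; omega :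
        n + 2 - 1 + 2 * ((j + 1 : ℕ) : ℤ) = n - 1 + 2 * ((j + 1 + 1 : ℕ) : ℤ))) h1
      rw [map_add, map_zero, vcast_vcast, vcast_vcast] at h2
      exact h2

end MixedComplex

namespace MixedComplex

variable {k : Type u} [Field k]

lemma uH_bounds (C : MixedComplex k) (n : ℤ) :
    ∀ x ∈ C.bnd (n + 2), C.nU n x ∈ C.bnd n := by
  rintro x ⟨y, rfl⟩
  refine ⟨C.nU (n + 1) (C.ncast (by omega) y), ?_⟩
  funext j
  simp only [LinearMap.comp_apply, nD_apply, nU_apply, ncast_apply]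
  cases j with
  | zero =>
      simp only [nDfun, nUfun, map_zero]
  | succ j =>
      cases j with
      | zero =>
          simp only [nDfun, nUfun, ncast_apply, b_vcast, B_vcast, vcast_vcast,
            map_zero, map_add, add_zero, zero_add]
      | succ j =>
          simp only [nDfun, nUfun, ncast_apply, b_vcast, B_vcast, vcast_vcast,
            map_zero, map_add, add_zero, zero_add]

lemma pH_cycles (C : MixedComplex k) (n : ℤ) :
    ∀ x ∈ C.cyc n, C.nP n x ∈ C.bcyc n := by
  intro x hx
  rw [cyc, LinearMap.mem_ker] at hx
  rw [bcyc, LinearMap.mem_ker]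
  have h0 : C.nDfun n x 0 = 0 := congrFun hx 0
  simp only [nDfun] at h0
  rw [vcast_eq_zero_iff] at h0
  simp only [nP_apply, b_vcast, h0, map_zero]

lemma pH_bounds (C : MixedComplex k) (n : ℤ) :
    ∀ x ∈ C.bnd n, C.nP n x ∈ C.bbnd n := by
  rintro x ⟨y, rfl⟩
  refine ⟨C.vcast (by push_cast; omega : n + 1 + 2 * ((0 : ℕ) : ℤ) = n + 1) (y 0), ?_⟩
  simp only [LinearMap.comp_apply, nP_apply, nD_apply, ncast_apply, nDfun,
    b_vcast, vcast_vcast]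

end MixedComplex

namespace MixedComplex

variable {k : Type u} [Field k]

/-- The inclusion `Kₙ → K[[u]]ₙ` in the `j = 0` component. -/
def inclFun (C : MixedComplex k) (n : ℤ) (x : C.V n) : ∀ j : ℕ, C.V (n + 2 * (j : ℤ))
  | 0 => C.vcast (by omega) x
  | (_ + 1) => 0

/-- The inclusion `Kₙ → K[[u]]ₙ` in the `j = 0` component, as a linear map. -/
def incl (C : MixedComplex k) (n : ℤ) : C.V n →ₗ[k] C.NC n where
  toFun := C.inclFun n
  map_add' x y := by
    funext j
    cases j with
    | zero => simp [inclFun]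
    | succ j => simp [inclFun]
  map_smul' c x := by
    funext j
    cases j with
    | zero => simp [inclFun]
    | succ j => simp [inclFun]

@[simp] lemma incl_apply (C : MixedComplex k) (n : ℤ) (x : C.V n) :
    C.incl n x = C.inclFun n x := rfl

lemma delta_cycles (C : MixedComplex k) (n : ℤ) :
    ∀ x ∈ C.bcyc n, C.incl (n + 1) (C.B n x) ∈ C.cyc (n + 1) := by
  intro x hx
  rw [bcyc, LinearMap.mem_ker] at hx
  rw [cyc, LinearMap.mem_ker]
  have ha := C.anticomm' n x
  rw [hx, map_zero, neg_zero, vcast_eq_zero_iff] at ha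
  funext j
  simp only [nD_apply, incl_apply, Pi.zero_apply]
  cases j with
  | zero =>
      simp only [nDfun, inclFun, b_vcast, vcast_vcast, ha, map_zero, Pi.zero_apply]
  | succ j =>
      cases j with
      | zero =>
          simp only [nDfun, inclFun, map_zero, zero_add, B_vcast, vcast_vcast,
            C.B_sq n x, Pi.zero_apply]
      | succ j =>
          simp only [nDfun, inclFun, map_zero, add_zero, Pi.zero_apply]

lemma delta_bounds (C : MixedComplex k) (n : ℤ) :
    ∀ x ∈ C.bbnd n, C.incl (n + 1) (C.B n x) ∈ C.bnd (n + 1) := by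
  rintro x ⟨y, rfl⟩
  refine ⟨-(C.incl (n + 1 + 1) (C.B (n + 1) y)), ?_⟩
  have hB : C.B (n + 1 - 1) (C.b (n + 1) y) =
      - C.vcast (by omega : n + 1 + 1 - 1 = n + 1 - 1 + 1)
        (C.b (n + 1 + 1) (C.B (n + 1) y)) :=
    eq_neg_of_add_eq_zero_right (C.anticomm (n + 1) y)
  funext j
  simp only [LinearMap.comp_apply, map_neg, ncast_apply, nD_apply, incl_apply,
    Pi.neg_apply, Pi.zero_apply]
  cases j with
  | zero =>
      simp only [nDfun, inclFun, b_vcast, B_vcast, vcast_vcast, hB, map_neg,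
        vcast_vcast, neg_neg, map_zero, Pi.zero_apply, Pi.neg_apply]
  | succ j =>
      cases j with
      | zero =>
          simp only [nDfun, inclFun, map_zero, zero_add, B_vcast, vcast_vcast,
            C.B_sq (n + 1) y, neg_zero, Pi.zero_apply, Pi.neg_apply]
      | succ j =>
          simp only [nDfun, inclFun, map_zero, add_zero, neg_zero, Pi.zero_apply, Pi.neg_apply]

end MixedComplex

namespace MixedComplex

variable {k : Type u} [Field k]

/-- A linear map carrying cycles to cycles and boundaries to boundaries induces a map on
subquotient homology. -/
def inducedQ {M N : Type v} [AddCommGroup M] [Module k M] [AddCommGroup N] [Module k N]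
    (Z Bd : Submodule k M) (Z' Bd' : Submodule k N) (f : M →ₗ[k] N)
    (h1 : ∀ x ∈ Z, f x ∈ Z') (h2 : ∀ x ∈ Bd, f x ∈ Bd') :
    (Z ⧸ Bd.comap Z.subtype) →ₗ[k] (Z' ⧸ Bd'.comap Z'.subtype) :=
  Submodule.mapQ _ _ (f.restrict h1) (by
    intro x hx
    simp only [Submodule.mem_comap, Submodule.coe_subtype, LinearMap.restrict_apply] at hx ⊢
    exact h2 _ hx)

/-- The map `u : HC⁻_{n+2}(K) → HC⁻ₙ(K)` induced by multiplication by `u`. -/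
def uH (C : MixedComplex k) (n : ℤ) : C.HCneg (n + 2) →ₗ[k] C.HCneg n :=
  inducedQ (C.cyc (n + 2)) (C.bnd (n + 2)) (C.cyc n) (C.bnd n) (C.nU n)
    (C.uH_cycles n) (C.uH_bounds n)

/-- The map `p : HC⁻ₙ(K) → HHₙ(K)` induced by the projection onto the `j = 0`
component. -/
def pH (C : MixedComplex k) (n : ℤ) : C.HCneg n →ₗ[k] C.HH n :=
  inducedQ (C.cyc n) (C.bnd n) (C.bcyc n) (C.bbnd n) (C.nP n)
    (C.pH_cycles n) (C.pH_bounds n)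

/-- The connecting homomorphism `δ : HHₙ(K) → HC⁻_{n+1}(K)` of the short exact sequence
`0 → K[[u]][-2] →(u) K[[u]] →(p) (K, b) → 0`: on a cycle `x ∈ Kₙ` it is obtained by
lifting `x` to `(x, 0, 0, …) ∈ K[[u]]ₙ`, applying `b + uB` (which gives
`u · (Bx, 0, 0, …)`) and dividing by `u`; hence it is induced by `x ↦ (Bx, 0, 0, …)`. -/
def delta (C : MixedComplex k) (n : ℤ) : C.HH n →ₗ[k] C.HCneg (n + 1) :=
  inducedQ (C.bcyc n) (C.bbnd n) (C.cyc (n + 1)) (C.bnd (n + 1))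
    ((C.incl (n + 1)).comp (C.B n)) (C.delta_cycles n) (C.delta_bounds n)

/-- Transport along an equality of degrees for negative cyclic homology. -/
def hccast (C : MixedComplex k) {n m : ℤ} (h : n = m) : C.HCneg n →ₗ[k] C.HCneg m := by
  subst h; exact LinearMap.id

end MixedComplex

namespace MixedComplex

variable {k : Type u} [Field k]

/-- Transport along an equality of degrees for Hochschild homology. -/
def hhcast (C : MixedComplex k) {n m : ℤ} (h : n = m) : C.HH n →ₗ[k] C.HH m := by
  subst h; exact LinearMap.id

/-- The degree-`m` part of the graded `k[u]`-module `HH_•(K)[[u]]`: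
`(HH_•(K)[[u]])ₘ = ∏_{j ≥ 0} HH_{m+2j}(K)`. -/
abbrev HHgr (C : MixedComplex k) (m : ℤ) := ∀ j : ℕ, C.HH (m + 2 * (j : ℤ))

/-- The action of `u` on `HH_•(K)[[u]]`: the canonical shift dropping the `j = 0`
component, `u : (HH_•(K)[[u]])_{m+2} → (HH_•(K)[[u]])ₘ`. -/
def uHHfun (C : MixedComplex k) (m : ℤ) (x : C.HHgr (m + 2)) :
    ∀ j : ℕ, C.HH (m + 2 * (j : ℤ))
  | 0 => 0
  | (j + 1) => C.hhcast (by push_cast; omega) (x j)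

/-- The action of `u` on `HH_•(K)[[u]]` as a linear map. -/
def uHHgr (C : MixedComplex k) (m : ℤ) : C.HHgr (m + 2) →ₗ[k] C.HHgr m where
  toFun := C.uHHfun m
  map_add' x y := by
    funext j
    cases j with
    | zero => simp [uHHfun]
    | succ j => simp [uHHfun]
  map_smul' c x := by
    funext j
    cases j with
    | zero => simp [uHHfun]
    | succ j => simp [uHHfun]

end MixedComplex

section Tower

variable {R : Type*} [Ring R] {A A' H : ℕ → Type*}
  [∀ l, AddCommGroup (A l)] [∀ l, Module R (A l)]
  [∀ l, AddCommGroup (A' l)] [∀ l, Module R (A' l)]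
  [∀ l, AddCommGroup (H l)] [∀ l, Module R (H l)]
  (u : ∀ l, A (l + 1) →ₗ[R] A l) (u' : ∀ l, A' (l + 1) →ₗ[R] A' l)

/-- Milnor's map `(X_l) ↦ (X_l - u X_{l+1})` of a tower `⋯ → A 2 → A 1 → A 0`. Its kernel is `lim A`
and its cokernel is `lim¹ A`; when both vanish, the preimage of `(c_l)` plays the role of
`(∑ⱼ uʲ c_{l+j})`. -/
def milnorMap : (∀ l, A l) →ₗ[R] ∀ l, A l :=
  LinearMap.pi fun l => LinearMap.proj l - u l ∘ₗ LinearMap.proj (l + 1)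

lemma milnorMap_apply (X : ∀ l, A l) (l : ℕ) : milnorMap u X l = X l - u l (X (l + 1)) := rfl

lemma milnorMap_eq_iff {X c : ∀ l, A l} :
    milnorMap u X = c ↔ ∀ l, X l = c l + u l (X (l + 1)) := by
  simp only [funext_iff, milnorMap_apply, sub_eq_iff_eq_add]

variable {u u'} in
lemma milnorMap_map {f : ∀ l, A l →ₗ[R] A' l} (hf : ∀ l x, f l (u l x) = u' l (f (l + 1) x))
    (X : ∀ l, A l) : milnorMap u' (fun l => f l (X l)) = fun l => f l (milnorMap u X l) := by
  funext l
  simp only [milnorMap_apply, map_sub, hf]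

variable {u} (hu : Function.Bijective (milnorMap u)) (s : ∀ l, H l →ₗ[R] A l)

/-- The sum `∑ₗ uˡ (s (h l))` in the bottom term of a tower whose `lim` and `lim¹` vanish. -/
noncomputable def towerSum : (∀ l, H l) →ₗ[R] A 0 :=
  LinearMap.proj 0 ∘ₗ (LinearEquiv.ofBijective (milnorMap u) hu).symm ∘ₗ LinearMap.piMap s

variable {s} in
lemma towerSum_eq_of_milnorMap_eq {h : ∀ l, H l} {X : ∀ l, A l}
    (hX : milnorMap u X = fun l => s l (h l)) : towerSum hu s h = X 0 :=
  congrFun ((LinearEquiv.symm_apply_eq (.ofBijective (milnorMap u) hu)).2 hX.symm) 0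

lemma exists_milnorMap_eq_and_towerSum_eq (h : ∀ l, H l) :
    ∃ X, milnorMap u X = (fun l => s l (h l)) ∧ towerSum hu s h = X 0 := by
  obtain ⟨X, hX⟩ := hu.surjective fun l => s l (h l)
  exact ⟨X, hX, towerSum_eq_of_milnorMap_eq hu hX⟩

lemma towerSum_succ (hu' : Function.Bijective (milnorMap fun l => u (l + 1))) (h : ∀ l, H l) :
    towerSum hu s h =
      s 0 (h 0) + u 0 (towerSum hu' (fun l => s (l + 1)) fun l => h (l + 1)) := by
  obtain ⟨X, hX, hX₀⟩ := exists_milnorMap_eq_and_towerSum_eq hu s h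
  have hX₁ : towerSum hu' (fun l => s (l + 1)) (fun l => h (l + 1)) = X 1 :=
    towerSum_eq_of_milnorMap_eq (X := fun l => X (l + 1)) hu' (funext fun l => congrFun hX (l + 1))
  rw [hX₀, hX₁, (milnorMap_eq_iff u).1 hX 0]

variable {s} {p : ∀ l, A l →ₗ[R] H l}

lemma towerSum_injective (hps : ∀ l, Function.LeftInverse (p l) (s l))
    (hup : ∀ l, Function.Exact (u l) (p l)) (hinj : ∀ l, Function.Injective (u l)) :
    Function.Injective (towerSum hu s) := by
  rw [injective_iff_map_eq_zero]
  intro h hh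
  obtain ⟨X, hX, hX₀⟩ := exists_milnorMap_eq_and_towerSum_eq hu s h
  have hXl := (milnorMap_eq_iff u).1 hX
  have p_X (l : ℕ) : p l (X l) = h l := by
    rw [hXl, map_add, hps, (hup l).apply_apply_eq_zero, add_zero]
  have X_eq_zero (l : ℕ) : X l = 0 := by
    induction l with
    | zero => rw [← hX₀, hh]
    | succ l ih =>
      have h_eq_zero : h l = 0 := by rw [← p_X, ih, map_zero]
      apply (injective_iff_map_eq_zero (u l)).1 (hinj l)
      rw [← ih, hXl l, h_eq_zero, map_zero, zero_add]
  funext l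
  rw [← p_X, X_eq_zero, map_zero, Pi.zero_apply]

lemma towerSum_surjective (hps : ∀ l, Function.LeftInverse (p l) (s l))
    (hup : ∀ l, Function.Exact (u l) (p l)) : Function.Surjective (towerSum hu s) := by
  have exists_remainder (l : ℕ) (x : A l) : ∃ y, x = s l (p l x) + u l y := by
    obtain ⟨y, hy⟩ := (hup l (x - s l (p l x))).1 (by rw [map_sub, hps, sub_self])
    exact ⟨y, by rw [hy, add_sub_cancel]⟩
  choose remainder h_remainder using exists_remainder
  intro x
  let X : ∀ l, A l := fun l => Nat.rec x remainder l
  have hX : milnorMap u X = fun l => s l (p l (X l)) :=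
    (milnorMap_eq_iff u).2 fun l => h_remainder l (X l)
  exact ⟨fun l => p l (X l), towerSum_eq_of_milnorMap_eq hu hX⟩

end Tower

namespace MixedComplex

variable {k : Type u} [Field k] (C : MixedComplex k)

section Chains

variable {n m : ℤ}

lemma vcast_injective (h : n = m) : Function.Injective (C.vcast h) := by
  subst h
  exact Function.injective_id

/-- The differential `b + uB : K[[u]]ₙ → K[[u]]ₘ` for any `n = m + 1`; taking the equality of
degrees as an argument keeps identities between composites free of casts. -/
def boundary (h : n = m + 1) : C.NC n →ₗ[k] C.NC m :=
  C.ncast (by omega : n - 1 = m) ∘ₗ C.nD n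

/-- Multiplication by `u` as a map `K[[u]]ₙ → K[[u]]ₘ` for any `n = m + 2`. -/
def mulU (h : n = m + 2) : C.NC n →ₗ[k] C.NC m :=
  C.nU m ∘ₗ C.ncast h

lemma boundary_zero (h : n = m + 1) (x : C.NC n) :
    C.boundary h x 0 = C.vcast (by omega) (C.b _ (x 0)) := by
  simp only [boundary, LinearMap.comp_apply, nD_apply, ncast_apply, nDfun, vcast_vcast]

lemma boundary_succ (h : n = m + 1) (x : C.NC n) (j : ℕ) :
    C.boundary h x (j + 1) = C.vcast (by push_cast; omega) (C.b _ (x (j + 1))) +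
      C.vcast (by push_cast; omega) (C.B _ (x j)) := by
  simp only [boundary, LinearMap.comp_apply, nD_apply, ncast_apply, nDfun, vcast_vcast, map_add]

lemma mulU_zero (h : n = m + 2) (x : C.NC n) : C.mulU h x 0 = 0 := rfl

lemma mulU_succ (h : n = m + 2) (x : C.NC n) (j : ℕ) :
    C.mulU h x (j + 1) = C.vcast (by push_cast; omega) (x j) := by
  subst h
  rfl

lemma incl_zero (x : C.V n) : C.incl n x 0 = C.vcast (by omega) x := rfl

lemma incl_succ (x : C.V n) (j : ℕ) : C.incl n x (j + 1) = 0 := rfl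

lemma nP_incl (x : C.V n) : C.nP n (C.incl n x) = x := by
  rw [nP_apply, incl_zero, vcast_vcast, vcast_rfl]

lemma nP_mulU (h : n = m + 2) (x : C.NC n) : C.nP m (C.mulU h x) = 0 := by
  rw [nP_apply, mulU_zero, map_zero]

lemma nP_boundary (h : n = m + 1) (x : C.NC n) :
    C.nP m (C.boundary h x) = C.vcast (by omega) (C.b n (C.nP n x)) := by
  simp only [nP_apply, boundary_zero, b_vcast, vcast_vcast]

lemma mulU_injective (h : n = m + 2) : Function.Injective (C.mulU h) := by
  intro x y hxy
  funext j
  apply C.vcast_injective (by push_cast; omega : n + 2 * (j : ℤ) = m + 2 * ((j + 1 : ℕ) : ℤ))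
  simpa only [mulU_succ] using congrFun hxy (j + 1)

lemma exact_mulU_nP (h : n = m + 2) : Function.Exact (C.mulU h) (C.nP m) := by
  refine fun x => ⟨fun hx => ⟨fun j => C.vcast (by push_cast; omega) (x (j + 1)), ?_⟩, ?_⟩
  · funext j
    cases j with
    | zero => exact ((C.vcast_eq_zero_iff (by omega : m + 2 * ((0 : ℕ) : ℤ) = m) (x 0)).1 hx).symm
    | succ j => rw [mulU_succ, vcast_vcast, vcast_rfl]
  · rintro ⟨y, rfl⟩
    exact C.nP_mulU h y

lemma exists_eq_incl_add_mulU (h : n = m + 2) (x : C.NC m) :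
    ∃ y : C.NC n, x = C.incl m (C.nP m x) + C.mulU h y := by
  obtain ⟨y, hy⟩ := (C.exact_mulU_nP h (x - C.incl m (C.nP m x))).1 (by
    rw [map_sub, nP_incl, sub_self])
  exact ⟨y, by rw [hy, add_sub_cancel]⟩

lemma boundary_mulU {n' m' : ℤ} (hn : n = n' + 2) (hn' : n' = m' + 1) (hm : n = m + 1)
    (hm' : m = m' + 2) (x : C.NC n) :
    C.boundary hn' (C.mulU hn x) = C.mulU hm' (C.boundary hm x) := by
  funext j
  match j with
  | 0 => simp only [boundary_zero, mulU_zero, map_zero]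
  | 1 => simp only [boundary_succ, mulU_succ, mulU_zero, boundary_zero, map_zero, add_zero, b_vcast,
      vcast_vcast]
  | j + 2 => simp only [boundary_succ, mulU_succ, map_add, b_vcast, B_vcast, vcast_vcast]

lemma vcast_b_B_add_vcast_B_b (x : C.V n) (h : n + 1 - 1 = m) (h' : n - 1 + 1 = m) :
    C.vcast h (C.b (n + 1) (C.B n x)) + C.vcast h' (C.B (n - 1) (C.b n x)) = 0 := by
  subst h'
  exact C.anticomm n x

lemma boundary_boundary {l : ℤ} (h : n = m + 1) (h' : m = l + 1) (x : C.NC n) :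
    C.boundary h' (C.boundary h x) = 0 := by
  funext j
  match j with
  | 0 =>
    rw [boundary_zero, boundary_zero, b_vcast, b_sq, map_zero, map_zero, Pi.zero_apply]
  | 1 =>
    simp only [boundary_succ, boundary_zero, map_add, b_vcast, B_vcast, b_sq, map_zero, zero_add,
      vcast_vcast, vcast_b_B_add_vcast_B_b, Pi.zero_apply]
  | j + 2 =>
    simp only [boundary_succ, map_add, b_vcast, B_vcast, b_sq, B_sq, map_zero, zero_add, add_zero,
      vcast_vcast, vcast_b_B_add_vcast_B_b, Pi.zero_apply]

lemma boundary_incl (h : n = m + 1) (h' : n + 1 = m + 2) {x : C.V n} (hx : x ∈ C.bcyc n) :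
    C.boundary h (C.incl n x) = C.mulU h' (C.incl (n + 1) (C.B n x)) := by
  rw [bcyc, LinearMap.mem_ker] at hx
  funext j
  match j with
  | 0 => rw [boundary_zero, mulU_zero, incl_zero, b_vcast, hx, map_zero, map_zero]
  | 1 => simp only [boundary_succ, mulU_succ, incl_succ, incl_zero, B_vcast, map_zero, zero_add,
      vcast_vcast]
  | j + 2 => simp only [boundary_succ, mulU_succ, incl_succ, map_zero, add_zero]

end Chains

section Homology

variable {n m : ℤ}

/-- The class in `HC⁻ₙ(K)` of a cycle. -/
def cls (z : C.NC n) (hz : z ∈ C.cyc n) : C.HCneg n :=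
  Submodule.Quotient.mk ⟨z, hz⟩

/-- The class in `HHₙ(K)` of a `b`-cycle. -/
def bcls (z : C.V n) (hz : z ∈ C.bcyc n) : C.HH n :=
  Submodule.Quotient.mk ⟨z, hz⟩

/-- Multiplication by `u` as a map `HC⁻ₙ(K) → HC⁻ₘ(K)` for any `n = m + 2`. -/
def mulUHC (h : n = m + 2) : C.HCneg n →ₗ[k] C.HCneg m :=
  C.uH m ∘ₗ C.hccast h

lemma mem_cyc_iff (h : n = m + 1) (z : C.NC n) : z ∈ C.cyc n ↔ C.boundary h z = 0 := by
  obtain rfl : m = n - 1 := by omega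
  rfl

lemma boundary_mem_cyc (h : n = m + 1) (x : C.NC n) : C.boundary h x ∈ C.cyc m :=
  (C.mem_cyc_iff (by omega : m = m - 1 + 1) _).2 (C.boundary_boundary _ _ x)

lemma mulU_mem_cyc_iff (h : n = m + 2) {z : C.NC n} : C.mulU h z ∈ C.cyc m ↔ z ∈ C.cyc n := by
  rw [C.mem_cyc_iff (by omega : m = m - 1 + 1), C.mem_cyc_iff (by omega : n = n - 1 + 1),
    C.boundary_mulU h _ _ (by omega : n - 1 = m - 1 + 2),
    map_eq_zero_iff _ (C.mulU_injective _)]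

lemma exists_cls_eq (x : C.HCneg n) : ∃ z hz, C.cls z hz = x := by
  obtain ⟨⟨z, hz⟩, rfl⟩ := Submodule.Quotient.mk_surjective _ x
  exact ⟨z, hz, rfl⟩

lemma exists_bcls_eq (x : C.HH n) : ∃ z hz, C.bcls z hz = x := by
  obtain ⟨⟨z, hz⟩, rfl⟩ := Submodule.Quotient.mk_surjective _ x
  exact ⟨z, hz, rfl⟩

lemma cls_eq_zero_iff (h : m = n + 1) {z : C.NC n} {hz : z ∈ C.cyc n} :
    C.cls z hz = 0 ↔ ∃ w : C.NC m, C.boundary h w = z := by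
  subst h
  exact Submodule.Quotient.mk_eq_zero _

lemma cls_eq_cls_iff (h : m = n + 1) {z z' : C.NC n} {hz : z ∈ C.cyc n} {hz' : z' ∈ C.cyc n} :
    C.cls z hz = C.cls z' hz' ↔ ∃ w : C.NC m, C.boundary h w = z - z' := by
  subst h
  exact Submodule.Quotient.eq _

lemma bcls_eq_zero_iff {z : C.V n} {hz : z ∈ C.bcyc n} :
    C.bcls z hz = 0 ↔ ∃ w : C.V (n + 1), C.vcast (by omega) (C.b (n + 1) w) = z :=
  Submodule.Quotient.mk_eq_zero _

lemma mulUHC_cls (h : n = m + 2) (z : C.NC n) (hz : z ∈ C.cyc n) :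
    C.mulUHC h (C.cls z hz) = C.cls (C.mulU h z) ((C.mulU_mem_cyc_iff h).2 hz) := by
  subst h
  rfl

lemma pH_cls (z : C.NC n) (hz : z ∈ C.cyc n) :
    C.pH n (C.cls z hz) = C.bcls (C.nP n z) (C.pH_cycles n z hz) := rfl

lemma delta_bcls (z : C.V n) (hz : z ∈ C.bcyc n) :
    C.delta n (C.bcls z hz) = C.cls (C.incl (n + 1) (C.B n z)) (C.delta_cycles n z hz) := rfl

lemma exact_mulUHC_pH (h : n = m + 2) : Function.Exact (C.mulUHC h) (C.pH m) := by
  refine fun x => ⟨fun hx => ?_, ?_⟩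
  · obtain ⟨z, hz, rfl⟩ := C.exists_cls_eq x
    rw [pH_cls, bcls_eq_zero_iff] at hx
    obtain ⟨w, hw⟩ := hx
    -- subtracting the boundary of a primitive of the constant term makes `z` divisible by `u`
    obtain ⟨y, hy⟩ := (C.exact_mulU_nP h (z - C.boundary rfl (C.incl (m + 1) w))).1 (by
      rw [map_sub, nP_boundary, nP_incl, hw, sub_self])
    have y_mem : y ∈ C.cyc n := by
      rw [← C.mulU_mem_cyc_iff h, hy]
      exact sub_mem hz (C.boundary_mem_cyc _ _)
    refine ⟨C.cls y y_mem, ?_⟩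
    rw [mulUHC_cls, C.cls_eq_cls_iff rfl]
    exact ⟨-C.incl (m + 1) w, by rw [hy, map_neg, sub_sub_cancel_left]⟩
  · rintro ⟨y, rfl⟩
    obtain ⟨z, hz, rfl⟩ := C.exists_cls_eq y
    rw [mulUHC_cls, pH_cls, bcls_eq_zero_iff]
    exact ⟨0, by rw [map_zero, map_zero, nP_mulU]⟩

lemma exact_pH_delta (n : ℤ) : Function.Exact (C.pH n) (C.delta n) := by
  have h : n = n - 1 + 1 := by omega
  have h' : n + 1 = n - 1 + 2 := by omega
  have h'' : n + 1 + 1 = n + 2 := by omega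
  refine fun x => ⟨fun hx => ?_, ?_⟩
  · obtain ⟨z, hz, rfl⟩ := C.exists_bcls_eq x
    rw [delta_bcls, C.cls_eq_zero_iff rfl] at hx
    obtain ⟨v, hv⟩ := hx
    -- if `B z = (b + uB) v`, then `z - u v` is a cycle lifting `z`
    have lift_mem : C.incl n z - C.mulU h'' v ∈ C.cyc n := by
      rw [C.mem_cyc_iff h, map_sub, C.boundary_incl h h' hz, C.boundary_mulU _ _ rfl h', hv,
        sub_self]
    refine ⟨C.cls _ lift_mem, ?_⟩
    rw [pH_cls]
    congr 1
    rw [map_sub, nP_incl, nP_mulU, sub_zero]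
  · rintro ⟨y, rfl⟩
    obtain ⟨z, hz, rfl⟩ := C.exists_cls_eq y
    obtain ⟨v, hv⟩ := C.exists_eq_incl_add_mulU h'' z
    rw [pH_cls, delta_bcls, C.cls_eq_zero_iff rfl]
    refine ⟨-v, C.mulU_injective h' ?_⟩
    rw [← C.boundary_incl h h' (C.pH_cycles n z hz), map_neg, map_neg,
      ← C.boundary_mulU h'' h rfl h', neg_eq_iff_add_eq_zero, add_comm, ← map_add, ← hv,
      ← C.mem_cyc_iff]
    exact hz

lemma exact_delta_mulUHC (h : n + 1 = m + 2) : Function.Exact (C.delta n) (C.mulUHC h) := by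
  have hnm : n = m + 1 := by omega
  have h' : n + 1 + 1 = n + 2 := by omega
  refine fun x => ⟨fun hx => ?_, ?_⟩
  · obtain ⟨z, hz, rfl⟩ := C.exists_cls_eq x
    rw [mulUHC_cls, C.cls_eq_zero_iff hnm] at hx
    obtain ⟨w, hw⟩ := hx
    -- the constant term `w₀` of a primitive `w` of `u z` is a `b`-cycle, and `z - B w₀` is exact
    have hw₀ : C.nP n w ∈ C.bcyc n := by
      rw [bcyc, LinearMap.mem_ker, ← C.vcast_eq_zero_iff (by omega : n - 1 = m),
        ← C.nP_boundary hnm, hw, nP_mulU]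
    obtain ⟨v, hv⟩ := C.exists_eq_incl_add_mulU h' w
    refine ⟨C.bcls (C.nP n w) hw₀, ?_⟩
    rw [delta_bcls, eq_comm, C.cls_eq_cls_iff rfl]
    refine ⟨v, C.mulU_injective h ?_⟩
    rw [← C.boundary_mulU h' hnm rfl h, map_sub, ← hw, ← C.boundary_incl hnm h hw₀, ← map_sub,
      eq_sub_of_add_eq' hv.symm]
  · rintro ⟨y, rfl⟩
    obtain ⟨z, hz, rfl⟩ := C.exists_bcls_eq y
    rw [delta_bcls, mulUHC_cls, C.cls_eq_zero_iff hnm]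
    exact ⟨C.incl n z, C.boundary_incl hnm h hz⟩

lemma delta_eq_zero_iff_pH_surjective : C.delta n = 0 ↔ Function.Surjective (C.pH n) := by
  rw [← LinearMap.range_eq_top, ← (C.exact_pH_delta n).linearMap_ker_eq, LinearMap.ker_eq_top]

lemma mulUHC_injective_iff (h : n = m + 2) :
    Function.Injective (C.mulUHC h) ↔ Function.Injective (C.uH m) := by
  subst h
  rfl

lemma delta_eq_zero_iff_uH_injective (h : n + 1 = m + 2) :
    C.delta n = 0 ↔ Function.Injective (C.uH m) := by
  rw [← C.mulUHC_injective_iff h, ← LinearMap.ker_eq_bot, (C.exact_delta_mulUHC h).linearMap_ker_eq,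
    LinearMap.range_eq_bot]

end Homology

section Completeness

variable {d : ℕ → ℤ} (hd : ∀ l, d (l + 1) = d l + 2)

/-- Milnor's map of the tower formed by the `K[[u]]` in degrees `d 0, d 1 = d 0 + 2, …` and
multiplication by `u`. -/
abbrev milnorMapNC : (∀ l, C.NC (d l)) →ₗ[k] ∀ l, C.NC (d l) :=
  milnorMap (A := fun l => C.NC (d l)) fun l => C.mulU (hd l)

/-- Milnor's map of the tower formed by the `HC⁻(K)` in degrees `d 0, d 1 = d 0 + 2, …` and
multiplication by `u`. -/
abbrev milnorMapHC : (∀ l, C.HCneg (d l)) →ₗ[k] ∀ l, C.HCneg (d l) :=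
  milnorMap (A := fun l => C.HCneg (d l)) fun l => C.mulUHC (hd l)

/-- The coefficient of `uⁱ` in `∑ⱼ uʲ c_{l+j}`. -/
def mulUSumCoeff (c : ∀ l, C.NC (d l)) : ∀ i l : ℕ, C.V (d l + 2 * (i : ℤ))
  | 0, l => c l 0
  | i + 1, l => c l (i + 1) +
      C.vcast (by rw [hd]; push_cast; ring) (mulUSumCoeff c i (l + 1))

lemma milnorMapNC_bijective : Function.Bijective (C.milnorMapNC hd) := by
  refine ⟨(injective_iff_map_eq_zero _).2 fun X hX => ?_, fun c => ?_⟩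
  · have hX' : ∀ l, X l = C.mulU (hd l) (X (l + 1)) := fun l => sub_eq_zero.1 (congrFun hX l)
    have coeff_eq_zero (i : ℕ) : ∀ l, X l i = 0 := by
      induction i with
      | zero => exact fun l => by rw [hX', mulU_zero]
      | succ i ih => exact fun l => by rw [hX', mulU_succ, ih, map_zero]
    exact funext fun l => funext fun i => coeff_eq_zero i l
  · refine ⟨fun l i => C.mulUSumCoeff hd c i l, (milnorMap_eq_iff _).2 fun l => funext fun i => ?_⟩
    cases i with
    | zero => rw [Pi.add_apply, mulU_zero, add_zero, mulUSumCoeff]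
    | succ i => rw [Pi.add_apply, mulU_succ, mulUSumCoeff]

variable {e : ℕ → ℤ} (he : ∀ l, e (l + 1) = e l + 2)

lemma milnorMapNC_boundary (hde : ∀ l, d l = e l + 1) (X : ∀ l, C.NC (d l)) :
    C.milnorMapNC he (fun l => C.boundary (hde l) (X l)) =
      fun l => C.boundary (hde l) (C.milnorMapNC hd X l) :=
  milnorMap_map (fun l x => C.boundary_mulU (hd l) (hde l) (hde (l + 1)) (he l) x) X

lemma milnorMapHC_injective : Function.Injective (C.milnorMapHC hd) := by
  rw [injective_iff_map_eq_zero]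
  intro x hx
  choose z hz hzx using fun l => C.exists_cls_eq (x l)
  have exists_primitive (l : ℕ) : ∃ w : C.NC (d l + 1),
      C.boundary rfl w = C.milnorMapNC hd z l := by
    rw [milnorMap_apply, ← C.cls_eq_cls_iff rfl (hz := hz l)
      (hz' := (C.mulU_mem_cyc_iff (hd l)).2 (hz (l + 1))),
      ← C.mulUHC_cls (hd l) (z (l + 1)) (hz (l + 1)), hzx, hzx]
    exact sub_eq_zero.1 (congrFun hx l)
  choose w hw using exists_primitive
  have hd' (l : ℕ) : d (l + 1) + 1 = d l + 1 + 2 := by rw [hd]; ring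
  obtain ⟨W, hW⟩ := (C.milnorMapNC_bijective hd').surjective w
  have boundary_W : (fun l => C.boundary rfl (W l)) = z := by
    apply (C.milnorMapNC_bijective hd).injective
    rw [C.milnorMapNC_boundary hd' hd, hW]
    exact funext hw
  funext l
  rw [← hzx]
  exact (C.cls_eq_zero_iff rfl).2 ⟨W l, congrFun boundary_W l⟩

lemma milnorMapHC_surjective : Function.Surjective (C.milnorMapHC hd) := by
  intro x
  choose c hc hcx using fun l => C.exists_cls_eq (x l)
  obtain ⟨X, hX⟩ := (C.milnorMapNC_bijective hd).surjective c
  have hd' (l : ℕ) : d (l + 1) - 1 = d l - 1 + 2 := by rw [hd]; ring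
  have hpred (l : ℕ) : d l = d l - 1 + 1 := by ring
  have boundary_X : (fun l => C.boundary (hpred l) (X l)) = 0 := by
    apply (C.milnorMapNC_bijective hd').injective
    rw [C.milnorMapNC_boundary hd hd', hX, map_zero]
    exact funext fun l => (C.mem_cyc_iff _ _).1 (hc l)
  have X_mem (l : ℕ) : X l ∈ C.cyc (d l) := (C.mem_cyc_iff (hpred l) _).2 (congrFun boundary_X l)
  refine ⟨fun l => C.cls (X l) (X_mem l), funext fun l => ?_⟩
  rw [milnorMap_apply, mulUHC_cls, ← hcx, sub_eq_iff_eq_add]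
  exact congrArg Submodule.Quotient.mk (Subtype.ext ((milnorMap_eq_iff _).1 hX l))

lemma milnorMapHC_bijective : Function.Bijective (C.milnorMapHC hd) :=
  ⟨C.milnorMapHC_injective hd, C.milnorMapHC_surjective hd⟩

end Completeness

section PowerSeries

variable {C} {n m : ℤ}

lemma hccast_bijective (h : n = m) : Function.Bijective (C.hccast h) := by
  subst h
  exact Function.bijective_id

lemma hhcast_injective (h : n = m) : Function.Injective (C.hhcast h) := by
  subst h
  exact Function.injective_id

lemma uHHgr_zero (x : C.HHgr (n + 2)) : C.uHHgr n x 0 = 0 := rfl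

lemma uHHgr_injective (n : ℤ) : Function.Injective (C.uHHgr n) :=
  fun _ _ hxy => funext fun j => hhcast_injective _ (congrFun hxy (j + 1))

variable (s : ∀ n, C.HH n →ₗ[k] C.HCneg n) {d : ℕ → ℤ} (hd : ∀ l, d (l + 1) = d l + 2)

/-- The sum `∑ₗ uˡ s(h_l)` in `HC⁻(K)` of classes `h_l` in degrees `d l = d 0 + 2l`. -/
noncomputable def adicSum : (∀ l, C.HH (d l)) →ₗ[k] C.HCneg (d 0) :=
  towerSum (C.milnorMapHC_bijective hd) fun l => s (d l)

lemma adicSum_succ (h : ∀ l, C.HH (d l)) :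
    adicSum s hd h = s (d 0) (h 0) +
      C.mulUHC (hd 0) (adicSum s (fun l => hd (l + 1)) fun l => h (l + 1)) :=
  towerSum_succ (C.milnorMapHC_bijective hd) (fun l => s (d l)) _ h

lemma adicSum_hhcast {d' : ℕ → ℤ} (hd' : ∀ l, d' (l + 1) = d' l + 2) (hdd' : ∀ l, d l = d' l)
    (h : ∀ l, C.HH (d l)) :
    adicSum s hd' (fun l => C.hhcast (hdd' l) (h l)) = C.hccast (hdd' 0) (adicSum s hd h) := by
  obtain rfl : d = d' := funext hdd'
  rfl

variable {s} in
lemma adicSum_bijective (hδ : ∀ n, C.delta n = 0) (hs : ∀ n, Function.LeftInverse (C.pH n) (s n)) :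
    Function.Bijective (adicSum s hd) := by
  have hps (l : ℕ) : Function.LeftInverse (C.pH (d l)) (s (d l)) := hs (d l)
  have hexact (l : ℕ) : Function.Exact (C.mulUHC (hd l)) (C.pH (d l)) := C.exact_mulUHC_pH (hd l)
  have hinj (l : ℕ) : Function.Injective (C.mulUHC (hd l)) :=
    (C.mulUHC_injective_iff (hd l)).2 <|
      (C.delta_eq_zero_iff_uH_injective (by ring)).1 (hδ (d l + 1))
  exact ⟨towerSum_injective _ hps hexact hinj, towerSum_surjective _ hps hexact⟩

lemma degree_succ (n : ℤ) (l : ℕ) : n + 2 * ((l + 1 : ℕ) : ℤ) = n + 2 * (l : ℤ) + 2 := by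
  push_cast
  ring

/-- The map `HH_•(K)[[u]] → HC⁻_•(K)`, `h ↦ ∑ₗ uˡ s(h_l)`, extending a family `s` of maps
`HHₙ(K) → HC⁻ₙ(K)`. -/
noncomputable def ofHHgr (n : ℤ) : C.HHgr n →ₗ[k] C.HCneg n :=
  C.hccast (by simp) ∘ₗ adicSum s (degree_succ n)

lemma hccast_mulUHC_hccast {a b c : ℤ} (h₁ : a = b + 2) (h₂ : b = n) (h₃ : c = a) (h₄ : c = n + 2)
    (x : C.HCneg c) : C.hccast h₂ (C.mulUHC h₁ (C.hccast h₃ x)) = C.uH n (C.hccast h₄ x) := by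
  subst h₃ h₂ h₁
  rfl

lemma ofHHgr_uHHgr (n : ℤ) (h : C.HHgr (n + 2)) :
    ofHHgr s n (C.uHHgr n h) = C.uH n (ofHHgr s (n + 2) h) := by
  have degree_shift (l : ℕ) : n + 2 + 2 * (l : ℤ) = n + 2 * ((l + 1 : ℕ) : ℤ) := by
    push_cast
    ring
  have tail_eq : adicSum s (fun l => degree_succ n (l + 1)) (fun l => C.uHHgr n h (l + 1)) =
      C.hccast (degree_shift 0) (adicSum s (degree_succ (n + 2)) h) :=
    adicSum_hhcast s (degree_succ (n + 2)) (fun l => degree_succ n (l + 1)) degree_shift h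
  have sum_eq : adicSum s (degree_succ n) (C.uHHgr n h) = C.mulUHC (degree_succ n 0)
      (C.hccast (degree_shift 0) (adicSum s (degree_succ (n + 2)) h)) := by
    rw [adicSum_succ, uHHgr_zero, map_zero, zero_add, tail_eq]
  rw [ofHHgr, LinearMap.comp_apply, sum_eq, hccast_mulUHC_hccast]
  rfl

variable {s} in
lemma ofHHgr_bijective (hδ : ∀ n, C.delta n = 0) (hs : ∀ n, Function.LeftInverse (C.pH n) (s n))
    (n : ℤ) : Function.Bijective (ofHHgr s n) :=
  (hccast_bijective _).comp (adicSum_bijective _ hδ hs)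

lemma exists_pH_section (hδ : ∀ n, C.delta n = 0) :
    ∃ s : ∀ n, C.HH n →ₗ[k] C.HCneg n, ∀ n, Function.LeftInverse (C.pH n) (s n) := by
  choose s hs using fun n => (C.pH n).exists_rightInverse_of_surjective
    (LinearMap.range_eq_top.2 (C.delta_eq_zero_iff_pH_surjective.1 (hδ n)))
  exact ⟨s, fun n => LinearMap.congr_fun (hs n)⟩

end PowerSeries

end MixedComplex

open MixedComplex in
/-- Let `k` be a field and `(K, b, B)` a mixed complex over `k`.
The connecting homomorphism `δ : HHₙ(K) → HC⁻_{n+1}(K)` vanishes for every `n` if and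
only if there exists an isomorphism of graded `k[u]`-modules `HC⁻_•(K) ≅ HH_•(K)[[u]]`,
i.e. a family of degreewise `k`-linear isomorphisms commuting with the action of `u`
(on `HC⁻_•(K)` the `u`-action is induced by multiplication by `u` on `K[[u]]`, and on
`HH_•(K)[[u]]ₘ = ∏_{j≥0} HH_{m+2j}(K)` it is the canonical shift dropping the `j = 0`
component). -/
theorem statement3 {k : Type u} [Field k] (C : MixedComplex k) :
    (∀ n : ℤ, C.delta n = 0) ↔
      ∃ e : ∀ n : ℤ, C.HCneg n ≃ₗ[k] C.HHgr n,
        ∀ (n : ℤ) (x : C.HCneg (n + 2)), e n (C.uH n x) = C.uHHgr n (e (n + 2) x) := by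
  refine ⟨fun hδ => ?_, fun ⟨e, he⟩ n => ?_⟩
  · obtain ⟨s, hs⟩ := exists_pH_section hδ
    let φ (n : ℤ) : C.HHgr n ≃ₗ[k] C.HCneg n :=
      .ofBijective (ofHHgr s n) (ofHHgr_bijective hδ hs n)
    refine ⟨fun n => (φ n).symm, fun n x => (φ n).symm_apply_eq.2 ?_⟩
    calc C.uH n x = C.uH n (φ (n + 2) ((φ (n + 2)).symm x)) := by
          rw [LinearEquiv.apply_symm_apply]
      _ = φ n (C.uHHgr n ((φ (n + 2)).symm x)) := (ofHHgr_uHHgr s n _).symm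
  · have semiconj : C.uHHgr (n - 1) ∘ e (n - 1 + 2) = e (n - 1) ∘ C.uH (n - 1) :=
      funext fun x => (he (n - 1) x).symm
    refine (C.delta_eq_zero_iff_uH_injective (by ring)).2 (.of_comp (f := e (n - 1)) ?_)
    rw [← semiconj]
    exact (uHHgr_injective _).comp (e _).injective
end

section
/- Let k be a field and A a unital associative k-algebra. Then the canonical degreewise projection from the Hochschild complex C_•(A), with C_n(A) = A ⊗ A^{⊗n} and Hochschild differential b, to the reduced Hochschild complex C^red_•(A) is a quasi-isomorphism, i.e. it induces an isomorphism on homology in every degree. -/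
/-!
The Hochschild complex is the alternating face map complex of a simplicial module, the cyclic bar
construction, and the kernel of the projection to the reduced complex is spanned by the degenerate
chains, the pure tensors `a₀ ⊗ ⋯ ⊗ aₙ` in which some `aᵢ` with `i ≥ 1` equals `1`. The Dold–Kan
projector `P` is a chain map homotopic to the identity. It annihilates the degenerate chains and
changes every chain only by degenerate ones, so `P` factors through the projection, and composing
the projection with `P` gives back the projection. Hence `P` induces an inverse of the projection
on homology.
-/

open scoped TensorProduct
open PiTensorProduct

universe u

/-- `Ā = A / (k · 1_A)`, the underlying `k`-vector space of `A` modulo scalars. -/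
abbrev RedQuot (k : Type u) [Field k] (A : Type u) [Ring A] [Algebra k A] :=
  A ⧸ (Submodule.span k {(1 : A)})

/-- The canonical projection `A → Ā`. -/
def redPr (k : Type u) [Field k] (A : Type u) [Ring A] [Algebra k A] :
    A →ₗ[k] RedQuot k A :=
  Submodule.mkQ _

/-- The reduced Hochschild chains `C^red_n(A) = A ⊗ Ā^{⊗n}` (tensor products over `k`). -/
abbrev CRed (k : Type u) [Field k] (A : Type u) [Ring A] [Algebra k A] (n : ℕ) :=
  A ⊗[k] (⨂[k]^n (RedQuot k A))

/-- The unreduced Hochschild chains `C_n(A) = A ⊗ A^{⊗n}` (tensor products over `k`). -/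
abbrev CUn (k : Type u) [Field k] (A : Type u) [Ring A] [Algebra k A] (n : ℕ) :=
  A ⊗[k] (⨂[k]^n A)

variable (k : Type u) [Field k]

/-- The property of being the Hochschild differential of the reduced Hochschild complex
`C^red_•(A)`:
`b(a₀ ⊗ a₁ ⊗ ⋯ ⊗ aₘ) = ∑_{i=0}^{m-1} (-1)^i a₀ ⊗ ⋯ ⊗ aᵢ·aᵢ₊₁ ⊗ ⋯ ⊗ aₘ
  + (-1)^m aₘ·a₀ ⊗ a₁ ⊗ ⋯ ⊗ a_{m-1}`,
required for all lifts `a` of the classes in `Ā`; this quantification over lifts encodes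
exactly the well-definedness of the descent of `b` to the reduced complex. -/
def IsRedHochschildDiff (A : Type u) [Ring A] [Algebra k A]
    (b : ∀ n : ℕ, CRed k A (n + 1) →ₗ[k] CRed k A n) : Prop :=
  ∀ (n : ℕ) (x₀ : A) (a : Fin (n + 1) → A),
    b n (x₀ ⊗ₜ[k] tprod k (fun j => redPr k A (a j))) =
      (x₀ * a 0) ⊗ₜ[k] tprod k (fun j : Fin n => redPr k A (a j.succ))
      + (∑ i : Fin n, ((-1 : k) ^ ((i : ℕ) + 1)) •
          (x₀ ⊗ₜ[k] tprod k (fun j : Fin n => redPr k A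
            (if (j : ℕ) < (i : ℕ) then a j.castSucc
             else if (j : ℕ) = (i : ℕ) then a i.castSucc * a i.succ
             else a j.succ))))
      + ((-1 : k) ^ (n + 1)) •
          ((a (Fin.last n) * x₀) ⊗ₜ[k] tprod k (fun j : Fin n => redPr k A (a j.castSucc)))

/-- The property of being the Connes operator `B` of the reduced Hochschild complex:
`B(a₀ ⊗ ⋯ ⊗ aₙ) = ∑_{i=0}^{n} (-1)^{n·i} 1 ⊗ aᵢ ⊗ ⋯ ⊗ aₙ ⊗ a₀ ⊗ ⋯ ⊗ a_{i-1}`,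
again required for all lifts. -/
def IsConnesOp (A : Type u) [Ring A] [Algebra k A]
    (Bop : ∀ n : ℕ, CRed k A n →ₗ[k] CRed k A (n + 1)) : Prop :=
  ∀ (n : ℕ) (x₀ : A) (a : Fin n → A),
    Bop n (x₀ ⊗ₜ[k] tprod k (fun j => redPr k A (a j))) =
      ∑ i : Fin (n + 1), ((-1 : k) ^ (n * (i : ℕ))) •
        ((1 : A) ⊗ₜ[k] tprod k (fun j : Fin (n + 1) =>
          redPr k A ((Fin.cons x₀ a : Fin (n + 1) → A) (i + j))))

/-- The property of being the Hochschild differential of the (unreduced) Hochschild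
complex `C_•(A)`, `C_n(A) = A ⊗ A^{⊗n}`, with the same formula as in the reduced case. -/
def IsHochschildDiff (A : Type u) [Ring A] [Algebra k A]
    (b : ∀ n : ℕ, CUn k A (n + 1) →ₗ[k] CUn k A n) : Prop :=
  ∀ (n : ℕ) (x₀ : A) (a : Fin (n + 1) → A),
    b n (x₀ ⊗ₜ[k] tprod k a) =
      (x₀ * a 0) ⊗ₜ[k] tprod k (fun j : Fin n => a j.succ)
      + (∑ i : Fin n, ((-1 : k) ^ ((i : ℕ) + 1)) •
          (x₀ ⊗ₜ[k] tprod k (fun j : Fin n =>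
            (if (j : ℕ) < (i : ℕ) then a j.castSucc
             else if (j : ℕ) = (i : ℕ) then a i.castSucc * a i.succ
             else a j.succ))))
      + ((-1 : k) ^ (n + 1)) •
          ((a (Fin.last n) * x₀) ⊗ₜ[k] tprod k (fun j : Fin n => a j.castSucc))

/-- The canonical degreewise projection `C_n(A) → C^red_n(A)` induced by `A → Ā`. -/
noncomputable def projMap (A : Type u) [Ring A] [Algebra k A] (n : ℕ) :
    CUn k A n →ₗ[k] CRed k A n :=
  TensorProduct.map LinearMap.id (PiTensorProduct.map (fun _ : Fin n => redPr k A))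

namespace Hochschild

section IntervalProd

variable {M : Type*} [Monoid M] {m n : ℕ}

/-- The ordered product `t p * t (p + 1) * ⋯ * t (q - 1)`, equal to `1` when `q ≤ p`. -/
def intervalProd (t : Fin n → M) (p q : Fin (n + 1)) : M :=
  Fin.induction 1 (fun i x => if p ≤ i.castSucc then x * t i else 1) q

lemma intervalProd_of_le (t : Fin n → M) {p q : Fin (n + 1)} (h : q ≤ p) :
    intervalProd t p q = 1 := by
  cases q using Fin.cases with
  | zero => rfl
  | succ i => exact (Fin.induction_succ ..).trans (if_neg (Fin.castSucc_lt_iff_succ_le.2 h).not_ge)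

lemma intervalProd_succ (t : Fin n → M) {p : Fin (n + 1)} {i : Fin n} (h : p ≤ i.castSucc) :
    intervalProd t p i.succ = intervalProd t p i.castSucc * t i :=
  (Fin.induction_succ ..).trans (if_pos h)

@[simp]
lemma intervalProd_self (t : Fin n → M) (p : Fin (n + 1)) : intervalProd t p p = 1 :=
  intervalProd_of_le t le_rfl

@[simp]
lemma intervalProd_castSucc_succ (t : Fin n → M) (i : Fin n) :
    intervalProd t i.castSucc i.succ = t i := by
  rw [intervalProd_succ t le_rfl, intervalProd_self, one_mul]

lemma intervalProd_mul (t : Fin n → M) {p q r : Fin (n + 1)} (hpq : p ≤ q) (hqr : q ≤ r) :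
    intervalProd t p q * intervalProd t q r = intervalProd t p r := by
  induction r using Fin.induction with
  | zero => simp [Fin.le_zero_iff.1 hqr, Fin.le_zero_iff.1 (hpq.trans hqr)]
  | succ i ih =>
    obtain rfl | hq := hqr.eq_or_lt
    · rw [intervalProd_self, mul_one]
    · have hqi : q ≤ i.castSucc := Fin.le_castSucc_iff.2 hq
      rw [intervalProd_succ t hqi, ← mul_assoc, ih hqi, intervalProd_succ t (hpq.trans hqi)]

lemma intervalProd_intervalProd (t : Fin n → M) (f : Fin (m + 1) →o Fin (n + 1))
    {p q : Fin (m + 1)} (h : p ≤ q) :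
    intervalProd (fun j => intervalProd t (f j.castSucc) (f j.succ)) p q =
      intervalProd t (f p) (f q) := by
  induction q using Fin.induction with
  | zero => simp [Fin.le_zero_iff.1 h]
  | succ i ih =>
    obtain rfl | hp := h.eq_or_lt
    · simp only [intervalProd_self]
    · have hpi : p ≤ i.castSucc := Fin.le_castSucc_iff.2 hp
      rw [intervalProd_succ _ hpi, ih hpi,
        intervalProd_mul t (f.monotone hpi) (f.monotone i.castSucc_lt_succ.le)]

lemma intervalProd_congr {t t' : Fin n → M} {p q : Fin (n + 1)}
    (h : ∀ i : Fin n, p ≤ i.castSucc → i.succ ≤ q → t i = t' i) :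
    intervalProd t p q = intervalProd t' p q := by
  induction q using Fin.induction with
  | zero => rfl
  | succ i ih =>
    rcases le_or_gt p i.castSucc with hp | hp
    · rw [intervalProd_succ t hp, intervalProd_succ t' hp, h i hp le_rfl,
        ih fun j hpj hji => h j hpj (hji.trans i.castSucc_lt_succ.le)]
    · simp only [intervalProd_of_le _ (Fin.castSucc_lt_iff_succ_le.1 hp)]

lemma intervalProd_update_of_notMem (t : Fin n → M) (i : Fin n) (x : M) {p q : Fin (n + 1)}
    (h : q ≤ i.castSucc ∨ i.succ ≤ p) :
    intervalProd (Function.update t i x) p q = intervalProd t p q := by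
  refine intervalProd_congr fun j hpj hjq => Function.update_of_ne ?_ _ _
  rintro rfl
  exact h.elim (fun h => (hjq.trans h).not_gt j.castSucc_lt_succ)
    (fun h => (h.trans hpj).not_gt j.castSucc_lt_succ)

lemma intervalProd_update_of_mem (t : Fin n → M) {i : Fin n} (x : M) {p q : Fin (n + 1)}
    (hp : p ≤ i.castSucc) (hq : i.succ ≤ q) :
    intervalProd (Function.update t i x) p q =
      intervalProd t p i.castSucc * x * intervalProd t i.succ q := by
  rw [← intervalProd_mul _ (hp.trans i.castSucc_lt_succ.le) hq, intervalProd_succ _ hp,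
    intervalProd_update_of_notMem t i x (.inl le_rfl),
    intervalProd_update_of_notMem t i x (.inr le_rfl), Function.update_self]

end IntervalProd

lemma exists_castSucc_le_and_lt_succ {α : Type*} [LinearOrder α] {m : ℕ} (f : Fin (m + 1) → α)
    {a : α} (h₀ : f 0 ≤ a) (hₗ : a < f (Fin.last m)) :
    ∃ j : Fin m, f j.castSucc ≤ a ∧ a < f j.succ := by
  by_contra! h
  have hle : ∀ j, f j ≤ a := Fin.induction h₀ h
  exact (hle _).not_gt hₗ

lemma intervalProd_update_comp {M : Type*} [Monoid M] {m n : ℕ} (f : Fin (m + 1) →o Fin (n + 1))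
    (t : Fin n → M) {i : Fin n} {j : Fin m} (hj : f j.castSucc ≤ i.castSucc)
    (hj' : i.succ ≤ f j.succ) (x : M) :
    (fun l : Fin m => intervalProd (Function.update t i x) (f l.castSucc) (f l.succ)) =
      Function.update (fun l => intervalProd t (f l.castSucc) (f l.succ)) j
        (intervalProd t (f j.castSucc) i.castSucc * x * intervalProd t i.succ (f j.succ)) := by
  refine Function.eq_update_iff.2 ⟨intervalProd_update_of_mem t x hj hj', fun l hl => ?_⟩
  refine intervalProd_update_of_notMem t i x (hl.lt_or_gt.imp (fun h => ?_) fun h => ?_)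
  · exact (f.monotone (Fin.succ_le_castSucc_iff.2 h)).trans hj
  · exact hj'.trans (f.monotone (Fin.succ_le_castSucc_iff.2 h))

section Pullback

variable {R A : Type*} [CommRing R] [Ring A] [Algebra R A] {m n : ℕ}

variable (R) in
/-- The pure tensor that a monotone map `f : [m] → [n]` associates to `x₀ ⊗ t` in the cyclic bar
construction. Entry `j` collects the factors `t i` with `f j ≤ i < f (j + 1)`; the factors outside
`[f 0, f m)` wrap around cyclically and are absorbed by `x₀`. -/
noncomputable def pullbackTensor (f : Fin (m + 1) →o Fin (n + 1)) (x₀ : A) (t : Fin n → A) :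
    A ⊗[R] ⨂[R]^m A :=
  (intervalProd t (f (Fin.last m)) (Fin.last n) * x₀ * intervalProd t 0 (f 0)) ⊗ₜ[R]
    tprod R fun j => intervalProd t (f j.castSucc) (f j.succ)

lemma pullbackTensor_eq_tmul_tprod {f : Fin (m + 1) →o Fin (n + 1)} {t : Fin n → A} (x₀ : A)
    {a b : A} {s : Fin m → A} (ha : intervalProd t (f (Fin.last m)) (Fin.last n) = a)
    (hb : intervalProd t 0 (f 0) = b)
    (hs : ∀ j : Fin m, intervalProd t (f j.castSucc) (f j.succ) = s j) :
    pullbackTensor R f x₀ t = (a * x₀ * b) ⊗ₜ[R] tprod R s := by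
  rw [pullbackTensor, ha, hb, funext hs]

lemma exists_linearMap_pullbackTensor_update (f : Fin (m + 1) →o Fin (n + 1)) (x₀ : A)
    (t : Fin n → A) (i : Fin n) :
    ∃ g : A →ₗ[R] A ⊗[R] ⨂[R]^m A, ∀ x, pullbackTensor R f x₀ (Function.update t i x) = g x := by
  -- `t i` occurs in exactly one entry: the leading one if `i < f 0` or `f m ≤ i`, and otherwise the
  -- entry `j` with `f j ≤ i < f (j + 1)`.
  rcases lt_or_ge i.castSucc (f 0) with h₀ | h₀
  · have hf (j) : i.succ ≤ f j :=
      (Fin.castSucc_lt_iff_succ_le.1 h₀).trans (f.monotone (Fin.zero_le j))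
    refine ⟨(TensorProduct.mk R A (⨂[R]^m A)).flip
      (tprod R fun j => intervalProd t (f j.castSucc) (f j.succ)) ∘ₗ LinearMap.mulLeftRight R
        (intervalProd t (f (Fin.last m)) (Fin.last n) * x₀ * intervalProd t 0 i.castSucc,
          intervalProd t i.succ (f 0)), fun x => ?_⟩
    simp [pullbackTensor, intervalProd_update_of_mem t x (Fin.zero_le _) (hf 0),
      intervalProd_update_of_notMem t i x (.inr (hf _)), mul_assoc]
  rcases le_or_gt (f (Fin.last m)) i.castSucc with hₗ | hₗ
  · have hf (j) : f j ≤ i.castSucc := (f.monotone (Fin.le_last j)).trans hₗ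
    refine ⟨(TensorProduct.mk R A (⨂[R]^m A)).flip
      (tprod R fun j => intervalProd t (f j.castSucc) (f j.succ)) ∘ₗ LinearMap.mulLeftRight R
        (intervalProd t (f (Fin.last m)) i.castSucc,
          intervalProd t i.succ (Fin.last n) * x₀ * intervalProd t 0 (f 0)), fun x => ?_⟩
    simp [pullbackTensor, intervalProd_update_of_mem t x hₗ (Fin.le_last _),
      intervalProd_update_of_notMem t i x (.inl (hf _)), mul_assoc]
  · obtain ⟨j, hj, hj'⟩ := exists_castSucc_le_and_lt_succ f h₀ hₗ
    rw [Fin.castSucc_lt_iff_succ_le] at hₗ hj'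
    refine ⟨TensorProduct.mk R A (⨂[R]^m A)
      (intervalProd t (f (Fin.last m)) (Fin.last n) * x₀ * intervalProd t 0 (f 0)) ∘ₗ
      (PiTensorProduct.tprod R).toLinearMap (fun l => intervalProd t (f l.castSucc) (f l.succ)) j ∘ₗ
        LinearMap.mulLeftRight R
          (intervalProd t (f j.castSucc) i.castSucc, intervalProd t i.succ (f j.succ)),
      fun x => ?_⟩
    simp [pullbackTensor, intervalProd_update_of_notMem t i x (.inl h₀),
      intervalProd_update_of_notMem t i x (.inr hₗ), intervalProd_update_comp f t hj hj']

/-- `pullbackTensor`, bundled as a multilinear map in `t` with values in the linear maps in `x₀`. -/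
noncomputable def pullbackMultilinear (f : Fin (m + 1) →o Fin (n + 1)) :
    MultilinearMap R (fun _ : Fin n => A) (A →ₗ[R] A ⊗[R] ⨂[R]^m A) :=
  MultilinearMap.mk'
    (fun t => (TensorProduct.mk R A (⨂[R]^m A)).flip
      (tprod R fun j => intervalProd t (f j.castSucc) (f j.succ)) ∘ₗ
        LinearMap.mulLeftRight R (intervalProd t (f (Fin.last m)) (Fin.last n),
          intervalProd t 0 (f 0)))
    (fun t i x y => by
      ext x₀
      obtain ⟨g, hg⟩ := exists_linearMap_pullbackTensor_update (R := R) f x₀ t i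
      change pullbackTensor R f x₀ _ = pullbackTensor R f x₀ _ + pullbackTensor R f x₀ _
      rw [hg, hg, hg, map_add])
    (fun t i c x => by
      ext x₀
      obtain ⟨g, hg⟩ := exists_linearMap_pullbackTensor_update (R := R) f x₀ t i
      change pullbackTensor R f x₀ _ = c • pullbackTensor R f x₀ _
      rw [hg, hg, map_smul])

variable (R A) in
/-- The structure map of the cyclic bar construction along a monotone map `f : [m] → [n]`. -/
noncomputable def pullback (f : Fin (m + 1) →o Fin (n + 1)) :
    A ⊗[R] (⨂[R]^n A) →ₗ[R] A ⊗[R] ⨂[R]^m A :=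
  TensorProduct.lift (PiTensorProduct.lift (pullbackMultilinear f)).flip

lemma pullback_tmul_tprod (f : Fin (m + 1) →o Fin (n + 1)) (x₀ : A) (t : Fin n → A) :
    pullback R A f (x₀ ⊗ₜ tprod R t) = pullbackTensor R f x₀ t := by
  simp [pullback, pullbackMultilinear, pullbackTensor]

@[ext]
lemma linearMap_ext {N : Type*} [AddCommMonoid N] [Module R N] {f g : A ⊗[R] (⨂[R]^n A) →ₗ[R] N}
    (h : ∀ x₀ t, f (x₀ ⊗ₜ tprod R t) = g (x₀ ⊗ₜ tprod R t)) : f = g := by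
  ext x₀ t
  exact h x₀ t

lemma pullback_succAbove_zero (x₀ : A) (t : Fin (n + 1) → A) :
    pullback R A (Fin.succAboveOrderEmb 0).toOrderHom (x₀ ⊗ₜ tprod R t) =
      (x₀ * t 0) ⊗ₜ[R] tprod R fun j : Fin n => t j.succ := by
  rw [pullback_tmul_tprod, ← one_mul (x₀ * _), ← mul_assoc]
  refine pullbackTensor_eq_tmul_tprod x₀ ?_ ?_ fun j => ?_
  · exact intervalProd_self t _
  · exact intervalProd_castSucc_succ t 0
  · exact intervalProd_castSucc_succ t j.succ

lemma pullback_succAbove_last (x₀ : A) (t : Fin (n + 1) → A) :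
    pullback R A (Fin.succAboveOrderEmb (Fin.last (n + 1))).toOrderHom (x₀ ⊗ₜ tprod R t) =
      (t (Fin.last n) * x₀) ⊗ₜ[R] tprod R fun j : Fin n => t j.castSucc := by
  rw [pullback_tmul_tprod, ← mul_one (_ * x₀)]
  refine pullbackTensor_eq_tmul_tprod x₀ ?_ ?_ fun j => ?_
  · simpa using intervalProd_castSucc_succ t (Fin.last n)
  · simp
  · simpa [-intervalProd_castSucc_succ] using intervalProd_castSucc_succ t j.castSucc

lemma pullback_succAbove_castSucc_succ (i : Fin n) (x₀ : A) (t : Fin (n + 1) → A) :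
    pullback R A (Fin.succAboveOrderEmb i.castSucc.succ).toOrderHom (x₀ ⊗ₜ tprod R t) =
      x₀ ⊗ₜ[R] tprod R fun j : Fin n =>
        if (j : ℕ) < i then t j.castSucc else if (j : ℕ) = i then t i.castSucc * t i.succ
        else t j.succ := by
  rw [pullback_tmul_tprod]
  nth_rw 2 [← mul_one x₀, ← one_mul x₀]
  refine pullbackTensor_eq_tmul_tprod x₀ ?_ ?_ fun j => ?_
  · simp
  · simp
  · rcases lt_trichotomy j i with hj | rfl | hj
    · have hj' : j.succ ≤ i.castSucc := Fin.succ_le_castSucc_iff.2 hj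
      simpa [hj, Fin.succAbove_succ_of_le _ _ hj', -intervalProd_castSucc_succ,
        Fin.succAbove_succ_of_le _ _ (j.castSucc_lt_succ.le.trans hj')]
        using intervalProd_castSucc_succ t j.castSucc
    · have h := intervalProd_succ t (p := j.castSucc.castSucc) (i := j.succ)
        j.castSucc.castSucc_lt_succ.le
      rw [← Fin.succ_castSucc, intervalProd_castSucc_succ] at h
      simpa using h
    · have hj' : i.castSucc < j.castSucc := hj
      simpa [hj.not_gt, Fin.val_ne_of_ne hj.ne', Fin.succAbove_succ_of_lt _ _ hj',
        Fin.succAbove_succ_of_lt _ _ (hj'.trans j.castSucc_lt_succ), -intervalProd_castSucc_succ]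
        using intervalProd_castSucc_succ t j.succ

lemma pullback_predAbove (i : Fin (n + 1)) (x₀ : A) (t : Fin n → A) :
    pullback R A i.predAboveOrderHom (x₀ ⊗ₜ tprod R t) =
      x₀ ⊗ₜ[R] tprod R (i.insertNth 1 t : Fin (n + 1) → A) := by
  rw [pullback_tmul_tprod]
  nth_rw 2 [← mul_one x₀, ← one_mul x₀]
  refine pullbackTensor_eq_tmul_tprod x₀ ?_ ?_ fun j => ?_
  · simp
  · simp
  · cases j using i.succAboveCases with
    | x => simp
    | p j =>
      have h : i.predAbove (i.succAbove j).castSucc = j.castSucc := by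
        rw [← Fin.castSucc_succAbove_castSucc, Fin.predAbove_succAbove]
      have h' : i.predAbove (i.succAbove j).succ = j.succ := by
        rcases le_or_gt i j.castSucc with hij | hij
        · rw [Fin.succAbove_of_le_castSucc _ _ hij,
            Fin.predAbove_succ_of_le _ _ (hij.trans j.castSucc_lt_succ.le)]
        · rw [Fin.succAbove_of_castSucc_lt _ _ hij, Fin.succ_castSucc,
            Fin.predAbove_castSucc_of_le _ _ (Fin.castSucc_lt_iff_succ_le.1 hij)]
      simp [h, h']

lemma pullback_id : pullback R A (OrderHom.id : Fin (n + 1) →o Fin (n + 1)) = LinearMap.id := by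
  ext x₀ t
  simp [pullback_tmul_tprod, pullbackTensor]

lemma pullback_comp {l : ℕ} (f : Fin (m + 1) →o Fin (n + 1)) (g : Fin (l + 1) →o Fin (m + 1)) :
    pullback R A (f.comp g) = pullback R A g ∘ₗ pullback R A f := by
  refine linearMap_ext fun x₀ t => ?_
  simp only [LinearMap.comp_apply, pullback_tmul_tprod, pullbackTensor, OrderHom.comp_coe,
    Function.comp_apply, intervalProd_intervalProd t f (Fin.le_last _),
    intervalProd_intervalProd t f (Fin.zero_le _),
    intervalProd_intervalProd t f (g.monotone Fin.castSucc_lt_succ.le)]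
  rw [← intervalProd_mul t (f.monotone (Fin.le_last (g (Fin.last l)))) (Fin.le_last _),
    ← intervalProd_mul t (Fin.zero_le _) (f.monotone (Fin.zero_le (g 0)))]
  simp only [mul_assoc]

variable (R A) in
/-- The Hochschild differential, as the alternating sum of the faces of the cyclic bar
construction. -/
noncomputable def differential (n : ℕ) : A ⊗[R] (⨂[R]^(n + 1) A) →ₗ[R] A ⊗[R] ⨂[R]^n A :=
  ∑ i : Fin (n + 2), (-1 : R) ^ (i : ℕ) • pullback R A i.succAboveOrderEmb.toOrderHom

lemma differential_tmul_tprod (x₀ : A) (t : Fin (n + 1) → A) :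
    differential R A n (x₀ ⊗ₜ tprod R t) =
      (x₀ * t 0) ⊗ₜ[R] tprod R (fun j : Fin n => t j.succ)
      + (∑ i : Fin n, ((-1 : R) ^ ((i : ℕ) + 1)) •
          (x₀ ⊗ₜ[R] tprod R (fun j : Fin n =>
            (if (j : ℕ) < (i : ℕ) then t j.castSucc
             else if (j : ℕ) = (i : ℕ) then t i.castSucc * t i.succ
             else t j.succ))))
      + ((-1 : R) ^ (n + 1)) •
          ((t (Fin.last n) * x₀) ⊗ₜ[R] tprod R (fun j : Fin n => t j.castSucc)) := by
  simp only [differential, LinearMap.sum_apply, LinearMap.smul_apply]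
  rw [Fin.sum_univ_succ, Fin.sum_univ_castSucc]
  simp only [Fin.succ_last, pullback_succAbove_zero, pullback_succAbove_last,
    pullback_succAbove_castSucc_succ, Fin.val_zero, Fin.val_succ, Fin.val_castSucc, Fin.val_last,
    pow_zero, one_smul, add_assoc]

end Pullback

section DoldKan

open CategoryTheory Simplicial AlgebraicTopology DoldKan Opposite

variable {R A : Type u} [CommRing R] [Ring A] [Algebra R A] {n : ℕ}

variable (R A) in
/-- The cyclic bar construction of `A`, whose alternating face map complex is the Hochschild
complex. -/
noncomputable def simplicialModule : SimplicialObject (ModuleCat.{u} R) where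
  obj Δ := ModuleCat.of R (A ⊗[R] ⨂[R]^Δ.unop.len A)
  map φ := ModuleCat.ofHom (pullback R A φ.unop.toOrderHom)
  map_id _ := by
    ext1
    exact pullback_id
  map_comp φ ψ := by
    ext1
    exact pullback_comp φ.unop.toOrderHom ψ.unop.toOrderHom

lemma alternatingFaceMapComplex_d (n : ℕ) :
    (AlternatingFaceMapComplex.obj (simplicialModule R A)).d (n + 1) n =
      ModuleCat.ofHom (differential R A n) := by
  rw [AlternatingFaceMapComplex.obj_d_eq]
  ext1
  simp only [ModuleCat.hom_sum, ModuleCat.hom_zsmul, differential]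
  refine Finset.sum_congr rfl fun i _ => ?_
  rw [← Int.cast_smul_eq_zsmul R]
  push_cast
  rfl

variable (R A) in
/-- The Dold–Kan projector of the cyclic bar construction: the idempotent endomorphism of the
Hochschild complex whose kernel is spanned by the degenerate chains. -/
noncomputable def normalization (n : ℕ) : A ⊗[R] (⨂[R]^n A) →ₗ[R] A ⊗[R] ⨂[R]^n A :=
  ((PInfty : K[simplicialModule R A] ⟶ _).f n).hom

lemma normalization_zero : normalization R A 0 = LinearMap.id := rfl

lemma normalization_tmul_tprod_of_eq_one (x₀ : A) {t : Fin n → A} {i : Fin n} (h : t i = 1) :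
    normalization R A n (x₀ ⊗ₜ tprod R t) = 0 := by
  obtain _ | n := n
  · exact i.elim0
  have hσ : normalization R A (n + 1) ∘ₗ pullback R A i.predAboveOrderHom = 0 :=
    congrArg ModuleCat.Hom.hom (σ_comp_PInfty (simplicialModule R A) i)
  rw [← Fin.insertNth_self_removeNth i t, h, ← pullback_predAbove]
  exact LinearMap.congr_fun hσ _

lemma comp_normalization {N : Type u} [AddCommGroup N] [Module R N]
    (g : A ⊗[R] (⨂[R]^n A) →ₗ[R] N)
    (hg : ∀ (x₀ : A) (t : Fin n → A) (i : Fin n), t i = 1 → g (x₀ ⊗ₜ tprod R t) = 0) :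
    g ∘ₗ normalization R A n = g := by
  let f : simplicialModule R A _⦋n⦌ ⟶ ModuleCat.of R N := ModuleCat.ofHom g
  have hf : DegeneraciesVanish f := by
    obtain _ | n := n
    · trivial
    refine fun i => ModuleCat.hom_ext (linearMap_ext fun x₀ t => ?_)
    change g (pullback R A i.predAboveOrderHom (x₀ ⊗ₜ tprod R t)) = 0
    rw [pullback_predAbove]
    exact hg _ _ i (Fin.insertNth_apply_same ..)
  have h : (PInfty : K[simplicialModule R A] ⟶ _).f n ≫ f = f := by
    rw [← add_zero (_ ≫ f), ← (degeneraciesVanish_iff_QInfty_f_comp f).1 hf,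
      ← Preadditive.add_comp, PInfty_f_add_QInfty_f, Category.id_comp]
  exact congrArg ModuleCat.Hom.hom h

lemma normalization_differential (x : A ⊗[R] ⨂[R]^(n + 1) A) :
    normalization R A n (differential R A n x) =
      differential R A n (normalization R A (n + 1) x) := by
  have h := (PInfty : K[simplicialModule R A] ⟶ _).comm (n + 1) n
  rw [alternatingFaceMapComplex_d] at h
  exact (LinearMap.congr_fun (congrArg ModuleCat.Hom.hom h) x).symm

lemma sub_normalization_mem_range {x : A ⊗[R] ⨂[R]^(n + 1) A}
    (hx : differential R A n x = 0) :
    x - normalization R A (n + 1) x ∈ LinearMap.range (differential R A (n + 1)) := by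
  have h := (homotopyPInftyToId (simplicialModule R A)).comm (n + 1)
  rw [Homotopy.dNext_succ_chainComplex, Homotopy.prevD_chainComplex, alternatingFaceMapComplex_d,
    alternatingFaceMapComplex_d] at h
  let η (m : ℕ) : A ⊗[R] (⨂[R]^m A) →ₗ[R] A ⊗[R] ⨂[R]^(m + 1) A :=
    ((homotopyPInftyToId (simplicialModule R A)).hom m (m + 1)).hom
  have hη : normalization R A (n + 1) x =
      η n (differential R A n x) + differential R A (n + 1) (η (n + 1) x) + x :=
    LinearMap.congr_fun (congrArg ModuleCat.Hom.hom h) x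
  rw [hx, map_zero, zero_add] at hη
  exact ⟨-η (n + 1) x, by rw [map_neg, hη]; abel⟩

end DoldKan

section Reduced

variable {k} {A : Type u} [Ring A] [Algebra k A] {n : ℕ}

lemma eq_differential {b : ∀ n : ℕ, CUn k A (n + 1) →ₗ[k] CUn k A n}
    (hb : IsHochschildDiff k A b) : b = differential k A :=
  funext fun n => linearMap_ext fun x₀ t => (hb n x₀ t).trans (differential_tmul_tprod x₀ t).symm

lemma redPr_one : redPr k A 1 = 0 :=
  (Submodule.Quotient.mk_eq_zero _).2 (Submodule.mem_span_singleton_self _)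

lemma redPr_eq_redPr_iff {a a' : A} : redPr k A a = redPr k A a' ↔ ∃ c : k, a = a' + c • 1 := by
  simp only [redPr, Submodule.mkQ_apply, Submodule.Quotient.eq, Submodule.mem_span_singleton,
    eq_sub_iff_add_eq', @eq_comm _ a]

lemma exists_redPr_rightInverse :
    ∃ σ : RedQuot k A →ₗ[k] A, redPr k A ∘ₗ σ = LinearMap.id :=
  (redPr k A).exists_rightInverse_of_surjective
    (LinearMap.range_eq_top.2 (Submodule.mkQ_surjective _))

lemma projMap_tmul_tprod (x₀ : A) (t : Fin n → A) :
    projMap k A n (x₀ ⊗ₜ tprod k t) = x₀ ⊗ₜ tprod k fun j => redPr k A (t j) := by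
  rw [projMap, TensorProduct.map_tmul, PiTensorProduct.map_tprod, LinearMap.id_apply]

lemma projMap_surjective (n : ℕ) : Function.Surjective (projMap k A n) := by
  obtain ⟨σ, hσ⟩ := exists_redPr_rightInverse (k := k) (A := A)
  refine LinearMap.surjective_of_comp_eq_id
    (TensorProduct.map LinearMap.id (PiTensorProduct.map fun _ => σ)) _ ?_
  rw [projMap, ← TensorProduct.map_comp, ← PiTensorProduct.map_comp, hσ, PiTensorProduct.map_id,
    LinearMap.id_comp, TensorProduct.map_id]

lemma projMap_differential {b : ∀ n : ℕ, CRed k A (n + 1) →ₗ[k] CRed k A n}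
    (hb : IsRedHochschildDiff k A b) (n : ℕ) (x : CUn k A (n + 1)) :
    projMap k A n (differential k A n x) = b n (projMap k A (n + 1) x) := by
  suffices h : projMap k A n ∘ₗ differential k A n = b n ∘ₗ projMap k A (n + 1) from
    LinearMap.congr_fun h x
  refine linearMap_ext fun x₀ t => ?_
  simp only [LinearMap.comp_apply, differential_tmul_tprod, map_add, map_sum, map_smul,
    projMap_tmul_tprod, hb n x₀ t]

lemma projMap_normalization (x : CUn k A n) :
    projMap k A n (normalization k A n x) = projMap k A n x := by
  refine LinearMap.congr_fun (comp_normalization (projMap k A n) fun x₀ t i hi => ?_) x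
  rw [projMap_tmul_tprod, MultilinearMap.map_coord_zero _ i (by rw [hi, redPr_one]),
    TensorProduct.tmul_zero]

lemma multilinearMap_eq_of_redPr_eq {N : Type*} [AddCommMonoid N] [Module k N]
    {g : MultilinearMap k (fun _ : Fin n => A) N} (hg : ∀ t i, t i = 1 → g t = 0)
    {t t' : Fin n → A} (h : ∀ i, redPr k A (t i) = redPr k A (t' i)) : g t = g t' := by
  suffices H : ∀ s : Finset (Fin n), g (s.piecewise t t') = g t' by
    simpa only [Finset.piecewise_univ] using H Finset.univ
  intro s
  induction s using Finset.induction_on with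
  | empty => rw [Finset.piecewise_empty]
  | insert j s hj ih =>
    obtain ⟨c, hc⟩ := redPr_eq_redPr_iff.1 (h j)
    rw [Finset.piecewise_insert, hc, g.map_update_add, g.map_update_smul,
      hg _ j (Function.update_self ..), smul_zero, add_zero,
      Function.update_eq_self_iff.2 (s.piecewise_eq_of_notMem t t' hj).symm, ih]

lemma normalization_eq_of_projMap_eq {x y : CUn k A n} (h : projMap k A n x = projMap k A n y) :
    normalization k A n x = normalization k A n y := by
  obtain ⟨σ, hσ⟩ := exists_redPr_rightInverse (k := k) (A := A)
  let τ : CRed k A n →ₗ[k] CUn k A n :=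
    TensorProduct.map LinearMap.id (PiTensorProduct.map fun _ => σ)
  -- `τ ∘ projMap` changes the entries of a pure tensor only by multiples of `1`.
  have hτ : normalization k A n ∘ₗ τ ∘ₗ projMap k A n = normalization k A n := by
    refine linearMap_ext fun x₀ t => ?_
    simp only [τ, LinearMap.comp_apply, projMap_tmul_tprod, TensorProduct.map_tmul,
      PiTensorProduct.map_tprod, LinearMap.id_apply]
    let g := (normalization k A n ∘ₗ TensorProduct.mk k A _ x₀).compMultilinearMap (tprod k)
    exact multilinearMap_eq_of_redPr_eq (g := g)
      (fun _ _ => normalization_tmul_tprod_of_eq_one x₀) fun i => LinearMap.congr_fun hσ _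
  rw [← hτ, LinearMap.comp_apply, LinearMap.comp_apply, h, LinearMap.comp_apply,
    LinearMap.comp_apply]

end Reduced

end Hochschild

/-- Let `k` be a field and `A` a unital associative `k`-algebra.  The
canonical degreewise projection from the Hochschild complex `C_•(A)` to the reduced
Hochschild complex `C^red_•(A)` is a chain map and a quasi-isomorphism: it induces an
isomorphism on homology in every degree (injectivity and surjectivity of the induced map
on homology are spelled out at the level of cycles and boundaries, in degree `0` and in
degrees `n + 1`). -/
theorem statement5 (A : Type u) [Ring A] [Algebra k A]
    (bun : ∀ n : ℕ, CUn k A (n + 1) →ₗ[k] CUn k A n) (hun : IsHochschildDiff k A bun)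
    (bred : ∀ n : ℕ, CRed k A (n + 1) →ₗ[k] CRed k A n)
    (hred : IsRedHochschildDiff k A bred) :
    -- the projection is a chain map
    (∀ (n : ℕ) (x : CUn k A (n + 1)),
      projMap k A n (bun n x) = bred n (projMap k A (n + 1) x)) ∧
    -- surjectivity on `H₀`
    (∀ y : CRed k A 0, ∃ x : CUn k A 0,
      projMap k A 0 x - y ∈ LinearMap.range (bred 0)) ∧
    -- injectivity on `H₀`
    (∀ x : CUn k A 0,
      projMap k A 0 x ∈ LinearMap.range (bred 0) → x ∈ LinearMap.range (bun 0)) ∧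
    -- surjectivity on `H_{n+1}`
    (∀ (n : ℕ) (y : CRed k A (n + 1)), bred n y = 0 →
      ∃ x : CUn k A (n + 1), bun n x = 0 ∧
        projMap k A (n + 1) x - y ∈ LinearMap.range (bred (n + 1))) ∧
    -- injectivity on `H_{n+1}`
    (∀ (n : ℕ) (x : CUn k A (n + 1)), bun n x = 0 →
      projMap k A (n + 1) x ∈ LinearMap.range (bred (n + 1)) →
        x ∈ LinearMap.range (bun (n + 1))) := by
  obtain rfl := Hochschild.eq_differential hun
  have hproj := Hochschild.projMap_differential hred
  refine ⟨hproj, fun y => ?_, fun x => ?_, fun n y hy => ?_, fun n x hx => ?_⟩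
  · obtain ⟨x, rfl⟩ := Hochschild.projMap_surjective 0 y
    exact ⟨x, by rw [sub_self]; exact Submodule.zero_mem _⟩
  · rintro ⟨y, hy⟩
    obtain ⟨y, rfl⟩ := Hochschild.projMap_surjective 1 y
    have hP := Hochschild.normalization_eq_of_projMap_eq ((hproj 0 y).trans hy)
    rw [Hochschild.normalization_zero] at hP
    exact ⟨y, hP⟩
  · obtain ⟨x, rfl⟩ := Hochschild.projMap_surjective (n + 1) y
    refine ⟨Hochschild.normalization k A (n + 1) x, ?_, ?_⟩
    · rw [← Hochschild.normalization_differential, ← map_zero (Hochschild.normalization k A n)]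
      exact Hochschild.normalization_eq_of_projMap_eq (by rw [hproj, hy, map_zero])
    · rw [Hochschild.projMap_normalization, sub_self]
      exact Submodule.zero_mem _
  · rintro ⟨y, hy⟩
    obtain ⟨y, rfl⟩ := Hochschild.projMap_surjective (n + 2) y
    have hP : Hochschild.normalization k A (n + 1) x = Hochschild.differential k A (n + 1)
        (Hochschild.normalization k A (n + 2) y) := by
      rw [← Hochschild.normalization_differential]
      exact Hochschild.normalization_eq_of_projMap_eq (by rw [hproj, hy])
    have h := Hochschild.sub_normalization_mem_range hx
    rw [hP] at h
    exact (Submodule.sub_mem_iff_left _ (LinearMap.mem_range_self _ _)).1 h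
end
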